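/- Let 0 < t < 1 and r = √(1−t²). The family of matrices 𝒮 = { τ(T_{(θ,η)}) : (θ,η) ∈ [0,2π)² } ⊆ GL₄(ℝ) is strongly irreducible: there exists no finite family V₁, …, V_N of nonzero proper linear subspaces of ℝ⁴ such that every matrix M ∈ 𝒮 satisfies M(V₁ ∪ … ∪ V_N) = V₁ ∪ … ∪ V_N. In particular, no nonzero proper subspace of ℝ⁴ is invariant under all the matrices τ(T_{(θ,η)}), (θ,η) ∈ [0,2π)². -/

import Mathlib

open Matrix Complex

/-- The algebra embedding `τ : M₂(ℂ) → M₄(ℝ)` replacing each entry `a` by the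
`2×2` block `Re(a)I + Im(a)J`, with `J = [[0,1],[−1,0]]`. -/
noncomputable def tauMap (A : Matrix (Fin 2) (Fin 2) ℂ) : Matrix (Fin 4) (Fin 4) ℝ :=
  !![(A 0 0).re,  (A 0 0).im,  (A 0 1).re,  (A 0 1).im;
     -(A 0 0).im, (A 0 0).re,  -(A 0 1).im, (A 0 1).re;
     (A 1 0).re,  (A 1 0).im,  (A 1 1).re,  (A 1 1).im;
     -(A 1 0).im, (A 1 0).re,  -(A 1 1).im, (A 1 1).re]

/-- The matrix `T_{(θ,η)}` built from transmission coefficient `t` and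
reflection coefficient `r`. -/
noncomputable def Tmat (t r θ η : ℝ) : Matrix (Fin 2) (Fin 2) ℂ :=
  !![-Complex.exp (-Complex.I * θ),
     (Complex.I * r / t) * (Complex.exp (-Complex.I * θ) - 1);
     -(Complex.I * r / t) * (Complex.exp (-Complex.I * θ) - Complex.exp (Complex.I * (η - θ))),
     -((r : ℂ)^2 / (t : ℂ)^2) *
        (Complex.exp (-Complex.I * θ) - 1 - Complex.exp (Complex.I * (η - θ)))
       - (1 / (t : ℂ)^2) * Complex.exp (Complex.I * η)]

/-- Values on rational points of the circle. -/
lemma circle_aux (x : ℝ) (hx : 0 ≤ x) : ∃ θ ∈ Set.Ico 0 (2 * Real.pi),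
    (1 + x ^ 2) * Real.cos θ = 1 - x ^ 2 ∧ (1 + x ^ 2) * Real.sin θ = 2 * x := by
  have hp : (0:ℝ) < 1 + x ^ 2 := by positivity
  have hs : Real.sqrt (1 + x ^ 2) ^ 2 = 1 + x ^ 2 := Real.sq_sqrt hp.le
  have hs0 : Real.sqrt (1 + x ^ 2) ≠ 0 := (Real.sqrt_pos.2 hp).ne'
  refine ⟨2 * Real.arctan x, ⟨?_, ?_⟩, ?_, ?_⟩
  · have := Real.arctan_nonneg.2 hx
    linarith
  · have := Real.arctan_lt_pi_div_two x
    have := Real.pi_pos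
    linarith
  · rw [Real.cos_two_mul, Real.cos_sq_arctan]
    field_simp
    ring
  · rw [Real.sin_two_mul, Real.sin_arctan, Real.cos_arctan]
    field_simp
    rw [hs]

lemma quad_aux {E : Type*} [AddCommGroup E] [Module ℝ E] (W : Submodule ℝ E) (u v w : E)
    (x y z : ℝ) (hxy : x ≠ y) (hxz : x ≠ z) (hyz : y ≠ z)
    (h1 : u + x • v + x ^ 2 • w ∈ W) (h2 : u + y • v + y ^ 2 • w ∈ W)
    (h3 : u + z • v + z ^ 2 • w ∈ W) : u ∈ W ∧ v ∈ W ∧ w ∈ W := by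
  have a1 : v + (x + y) • w ∈ W := by
    have := W.smul_mem (x - y)⁻¹ (W.sub_mem h1 h2)
    convert this using 1
    have : x - y ≠ 0 := sub_ne_zero.2 hxy
    rw [eq_inv_smul_iff₀ this]
    module
  have a2 : v + (x + z) • w ∈ W := by
    have := W.smul_mem (x - z)⁻¹ (W.sub_mem h1 h3)
    convert this using 1
    have : x - z ≠ 0 := sub_ne_zero.2 hxz
    rw [eq_inv_smul_iff₀ this]
    module
  have hw : w ∈ W := by
    have := W.smul_mem (y - z)⁻¹ (W.sub_mem a1 a2)
    convert this using 1
    have : y - z ≠ 0 := sub_ne_zero.2 hyz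
    rw [eq_inv_smul_iff₀ this]
    module
  have hv : v ∈ W := by
    have := W.sub_mem a1 (W.smul_mem (x + y) hw)
    simpa using this
  refine ⟨?_, hv, hw⟩
  have := W.sub_mem (W.sub_mem h1 (W.smul_mem x hv)) (W.smul_mem (x ^ 2) hw)
  convert this using 1
  module

/-- If an affine image of the circle lies in a finite union of subspaces, then one of them contains
the image of the whole plane. -/
lemma circle_union {ι E : Type*} [Finite ι] [AddCommGroup E] [Module ℝ E]
    (V : ι → Submodule ℝ E) (f : ℝ → ℝ → E)
    (hf : ∀ c s, f c s = f 0 0 + c • (f 1 0 - f 0 0) + s • (f 0 1 - f 0 0))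
    (h : ∀ θ ∈ Set.Ico 0 (2 * Real.pi), ∃ j, f (Real.cos θ) (Real.sin θ) ∈ V j) :
    ∃ j, ∀ c s, f c s ∈ V j := by
  obtain ⟨p, hp⟩ : ∃ p, p = f 0 0 := ⟨_, rfl⟩
  obtain ⟨q, hq⟩ : ∃ q, q = f 1 0 - f 0 0 := ⟨_, rfl⟩
  obtain ⟨q', hq'⟩ : ∃ q, q = f 0 1 - f 0 0 := ⟨_, rfl⟩
  simp only [← hq, ← hq'] at hf
  simp only [← hp] at hf
  have key : ∀ n : ℕ, ∃ j, (p + q) + (n : ℝ) • ((2:ℝ) • q') + (n : ℝ) ^ 2 • (p - q) ∈ V j := by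
    intro n
    obtain ⟨θ, hθ, hc, hs⟩ := circle_aux n (Nat.cast_nonneg n)
    obtain ⟨j, hj⟩ := h θ hθ
    refine ⟨j, ?_⟩
    have := (V j).smul_mem (1 + (n : ℝ) ^ 2) hj
    rw [hf, smul_add, smul_add, smul_smul, smul_smul, hc, hs] at this
    convert this using 1
    module
  choose g hg using key
  obtain ⟨j, hj⟩ := Finite.exists_infinite_fiber g
  have hinf : (g ⁻¹' {j}).Infinite := Set.infinite_coe_iff.1 hj
  obtain ⟨x, hx, -⟩ := hinf.exists_gt 0
  obtain ⟨y, hy, hxy⟩ := hinf.exists_gt x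
  obtain ⟨z, hz, hyz⟩ := hinf.exists_gt y
  have ex : g x = j := hx
  have ey : g y = j := hy
  have ez : g z = j := hz
  obtain ⟨h1, h2, h3⟩ := quad_aux (V j) _ _ _ (x:ℝ) (y:ℝ) (z:ℝ)
    (by exact_mod_cast hxy.ne) (by exact_mod_cast (hxy.trans hyz).ne) (by exact_mod_cast hyz.ne)
    (ex ▸ hg x) (ey ▸ hg y) (ez ▸ hg z)
  refine ⟨j, fun c s => ?_⟩
  rw [hf]
  have := (V j).add_mem ((V j).add_mem ((V j).smul_mem ((1 + c) / 2) h1)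
    ((V j).smul_mem (s / 2) h2)) ((V j).smul_mem ((1 - c) / 2) h3)
  convert this using 1
  module

/-- The action of `τ(T)` in coordinates, `m = r / t`, as a function of
`(c, d) = (cos θ, sin θ)` and `(C, D) = (cos η, sin η)`. -/
def Gvec (m : ℝ) (x : Fin 4 → ℝ) (c d C D : ℝ) : Fin 4 → ℝ :=
  ![-c * x 0 + d * x 1 + m * d * x 2 + m * (c - 1) * x 3,
    -d * x 0 - c * x 1 - m * (c - 1) * x 2 + m * d * x 3,
    m * (-d - c * D + d * C) * x 0 - m * (c - c * C - d * D) * x 1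
      + (-m ^ 2 * (c - 1 - c * C - d * D) - (1 + m ^ 2) * C) * x 2
      + (-m ^ 2 * (-d - c * D + d * C) - (1 + m ^ 2) * D) * x 3,
    m * (c - c * C - d * D) * x 0 + m * (-d - c * D + d * C) * x 1
      - (-m ^ 2 * (-d - c * D + d * C) - (1 + m ^ 2) * D) * x 2
      + (-m ^ 2 * (c - 1 - c * C - d * D) - (1 + m ^ 2) * C) * x 3]

lemma tau_eq (t r : ℝ) (ht : t ≠ 0) (hr : r ^ 2 = 1 - t ^ 2) (θ η : ℝ) (x : Fin 4 → ℝ) :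
    (tauMap (Tmat t r θ η)).mulVec x =
      Gvec (r / t) x (Real.cos θ) (Real.sin θ) (Real.cos η) (Real.sin η) := by
  have e1 : Complex.exp (-Complex.I * θ) = ⟨Real.cos θ, -Real.sin θ⟩ := by
    apply Complex.ext <;> simp [Complex.exp_re, Complex.exp_im]
  have e2 : Complex.exp (Complex.I * η) = ⟨Real.cos η, Real.sin η⟩ := by
    apply Complex.ext <;> simp [Complex.exp_re, Complex.exp_im]
  have e3 : Complex.exp (Complex.I * (η - θ)) = Complex.exp (Complex.I * η) *
      Complex.exp (-Complex.I * θ) := by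
    rw [← Complex.exp_add]; congr 1; ring
  have e4 : Complex.I * r / t = ⟨0, r / t⟩ := by
    have : Complex.I * r / t = Complex.I * ((r / t : ℝ) : ℂ) := by push_cast; ring
    rw [this]
    apply Complex.ext <;> simp
  have e5 : (r : ℂ) ^ 2 / (t : ℂ) ^ 2 = ⟨(r / t) ^ 2, 0⟩ := by
    have : (r : ℂ) ^ 2 / (t : ℂ) ^ 2 = (((r / t) ^ 2 : ℝ) : ℂ) := by push_cast; ring
    rw [this]; rfl
  have e6 : 1 / (t : ℂ) ^ 2 = ⟨1 + (r / t) ^ 2, 0⟩ := by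
    have h : 1 + (r / t) ^ 2 = 1 / t ^ 2 := by
      field_simp; linarith
    rw [h]
    have : 1 / (t : ℂ) ^ 2 = ((1 / t ^ 2 : ℝ) : ℂ) := by push_cast; ring
    rw [this]; rfl
  unfold Tmat
  rw [e3, e1, e2, e4, e5, e6]
  generalize r / t = m
  ext i
  fin_cases i <;>
    simp [tauMap, Gvec, Matrix.mulVec, dotProduct, Fin.sum_univ_four] <;> ring

lemma top_aux (W : Submodule ℝ (Fin 4 → ℝ)) (h0 : ![1,0,0,0] ∈ W) (h1 : ![0,1,0,0] ∈ W)
    (h2 : ![0,0,1,0] ∈ W) (h3 : ![0,0,0,1] ∈ W) : W = ⊤ := by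
  rw [eq_top_iff]
  intro y _
  have := W.add_mem (W.add_mem (W.add_mem (W.smul_mem (y 0) h0) (W.smul_mem (y 1) h1))
    (W.smul_mem (y 2) h2)) (W.smul_mem (y 3) h3)
  convert this using 1
  ext i; fin_cases i <;> simp

/-- If the last complex coordinate of `x` is nonzero, the span contains the last complex axis. -/
lemma axis_aux (m : ℝ) (W : Submodule ℝ (Fin 4 → ℝ)) (x : Fin 4 → ℝ)
    (hW : ∀ c d C D, Gvec m x c d C D ∈ W) (hx : x 2 ^ 2 + x 3 ^ 2 ≠ 0) (a b : ℝ) :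
    ![0, 0, a, b] ∈ W := by
  have k1 := W.sub_mem (hW 0 0 1 0) (hW 0 0 0 0)
  have k2 := W.sub_mem (hW 0 0 0 1) (hW 0 0 0 0)
  have hm : (1 + m ^ 2) ≠ 0 := by positivity
  have := W.add_mem
    (W.smul_mem (-(a * x 2 + b * x 3) / ((1 + m ^ 2) * (x 2 ^ 2 + x 3 ^ 2))) k1)
    (W.smul_mem (-(a * x 3 - b * x 2) / ((1 + m ^ 2) * (x 2 ^ 2 + x 3 ^ 2))) k2)
  convert this using 1
  ext i; fin_cases i <;> simp [Gvec] <;> field_simp <;> ring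

lemma top_of_axis (m : ℝ) (hm : m ≠ 0) (W : Submodule ℝ (Fin 4 → ℝ))
    (hW : ∀ c d C D, Gvec m ![0, 0, 1, 0] c d C D ∈ W) : W = ⊤ := by
  have ax := axis_aux m W _ hW (by simp)
  have k1 := W.sub_mem (hW 1 0 0 0) (hW 0 0 0 0)
  have k2 := W.sub_mem (hW 0 1 0 0) (hW 0 0 0 0)
  refine top_aux W ?_ ?_ (ax 1 0) (ax 0 1)
  · have := W.add_mem (W.smul_mem m⁻¹ k2) (ax 0 m)
    convert this using 1
    ext i; fin_cases i <;> simp [Gvec] <;> field_simp <;> ring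
  · have := W.add_mem (W.smul_mem (-m⁻¹) k1) (ax (-m) 0)
    convert this using 1
    ext i; fin_cases i <;> simp [Gvec] <;> field_simp <;> ring

lemma top_of_first (m : ℝ) (hm : m ≠ 0) (W : Submodule ℝ (Fin 4 → ℝ)) (x : Fin 4 → ℝ)
    (h2 : x 2 = 0) (h3 : x 3 = 0) (hx : x 0 ^ 2 + x 1 ^ 2 ≠ 0)
    (hW : ∀ c d C D, Gvec m x c d C D ∈ W) : W = ⊤ := by
  have hB : ∀ c d : ℝ, ![-c * x 0 + d * x 1, -d * x 0 - c * x 1, 0, 0] ∈ W := by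
    intro c d
    convert hW c d 1 0 using 1
    ext i; fin_cases i <;> simp [Gvec, h2, h3]
  have hD : ∀ c d : ℝ, ![0, 0, m * (-d * x 0 - c * x 1), m * (c * x 0 - d * x 1)] ∈ W := by
    intro c d
    have := W.sub_mem (hW c d 0 0) (hB c d)
    convert this using 1
    ext i; fin_cases i <;> simp [Gvec, h2, h3] <;> ring
  refine top_aux W ?_ ?_ ?_ ?_
  · convert hB (-x 0 / (x 0 ^ 2 + x 1 ^ 2)) (x 1 / (x 0 ^ 2 + x 1 ^ 2)) using 1
    ext i; fin_cases i <;> simp <;> field_simp <;> ring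
  · convert hB (-x 1 / (x 0 ^ 2 + x 1 ^ 2)) (-x 0 / (x 0 ^ 2 + x 1 ^ 2)) using 1
    ext i; fin_cases i <;> simp <;> field_simp <;> ring
  · convert hD (-x 1 / (m * (x 0 ^ 2 + x 1 ^ 2))) (-x 0 / (m * (x 0 ^ 2 + x 1 ^ 2))) using 1
    ext i; fin_cases i <;> simp [-mul_eq_zero, -zero_eq_mul] <;> field_simp <;> ring
  · convert hD (x 0 / (m * (x 0 ^ 2 + x 1 ^ 2))) (-x 1 / (m * (x 0 ^ 2 + x 1 ^ 2))) using 1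
    ext i; fin_cases i <;> simp [-mul_eq_zero, -zero_eq_mul] <;> field_simp <;> ring

lemma union_step {ι : Type*} [Finite ι] (m : ℝ) (V : ι → Submodule ℝ (Fin 4 → ℝ))
    (x : Fin 4 → ℝ)
    (h : ∀ θ ∈ Set.Ico 0 (2 * Real.pi), ∀ η ∈ Set.Ico 0 (2 * Real.pi),
      ∃ j, Gvec m x (Real.cos θ) (Real.sin θ) (Real.cos η) (Real.sin η) ∈ V j) :
    ∃ j, ∀ c d C D, Gvec m x c d C D ∈ V j := by
  have key : ∃ j, ∀ C D, (fun p : ℝ × ℝ => Gvec m x p.1 p.2 C D) ∈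
      Submodule.pi Set.univ (fun _ : ℝ × ℝ => V j) := by
    refine circle_union (fun j => Submodule.pi Set.univ (fun _ : ℝ × ℝ => V j))
      (fun C D => fun p : ℝ × ℝ => Gvec m x p.1 p.2 C D) ?_ ?_
    · intro C D
      funext p
      ext i; fin_cases i <;> simp [Gvec] <;> ring
    · intro η hη
      obtain ⟨j, hj⟩ := circle_union V
        (fun c d => Gvec m x c d (Real.cos η) (Real.sin η))
        (by
          intro c d
          ext i; fin_cases i <;> simp [Gvec] <;> ring) (fun θ hθ => h θ hθ η hη)
      exact ⟨j, fun p _ => hj p.1 p.2⟩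
  obtain ⟨j, hj⟩ := key
  exact ⟨j, fun c d C D => hj C D (c, d) (Set.mem_univ _)⟩

/-- No finite family of proper subspaces, not all zero, has a forward invariant union. -/
lemma no_invariant {ι : Type*} [Finite ι] (t r : ℝ) (ht : 0 < t) (ht1 : t < 1)
    (hr : r = Real.sqrt (1 - t ^ 2)) (V : ι → Submodule ℝ (Fin 4 → ℝ)) (hV : ∀ i, V i ≠ ⊤)
    (h : ∀ θ ∈ Set.Ico 0 (2 * Real.pi), ∀ η ∈ Set.Ico 0 (2 * Real.pi), ∀ i, ∀ x ∈ V i,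
      ∃ j, (tauMap (Tmat t r θ η)).mulVec x ∈ V j) (i : ι) : V i = ⊥ := by
  have hpos : 0 < 1 - t ^ 2 := by nlinarith
  have hr2 : r ^ 2 = 1 - t ^ 2 := by rw [hr]; exact Real.sq_sqrt hpos.le
  have hm : r / t ≠ 0 := by
    have : 0 < r := hr ▸ Real.sqrt_pos.2 hpos
    positivity
  have step : ∀ i, ∀ x ∈ V i, ∃ j, ∀ c d C D, Gvec (r / t) x c d C D ∈ V j := by
    intro i x hx
    refine union_step _ V x fun θ hθ η hη => ?_
    obtain ⟨j, hj⟩ := h θ hθ η hη i x hx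
    exact ⟨j, tau_eq t r ht.ne' hr2 θ η x ▸ hj⟩
  rw [Submodule.eq_bot_iff]
  intro x hx
  obtain ⟨j, hj⟩ := step i x hx
  by_cases h23 : x 2 ^ 2 + x 3 ^ 2 = 0
  · have h2 : x 2 = 0 := by nlinarith [sq_nonneg (x 2), sq_nonneg (x 3)]
    have h3 : x 3 = 0 := by nlinarith [sq_nonneg (x 2), sq_nonneg (x 3)]
    by_cases h01 : x 0 ^ 2 + x 1 ^ 2 = 0
    · have h0 : x 0 = 0 := by nlinarith [sq_nonneg (x 0), sq_nonneg (x 1)]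
      have h1 : x 1 = 0 := by nlinarith [sq_nonneg (x 0), sq_nonneg (x 1)]
      ext k; fin_cases k <;> simp [h0, h1, h2, h3]
    · exact absurd (top_of_first _ hm _ x h2 h3 h01 hj) (hV j)
  · obtain ⟨k, hk⟩ := step j _ (axis_aux _ _ x hj h23 1 0)
    exact absurd (top_of_axis _ hm _ hk) (hV k)

theorem strongly_irreducible_tau_T (t r : ℝ) (ht : 0 < t) (ht1 : t < 1)
    (hr : r = Real.sqrt (1 - t ^ 2)) :
    -- strong irreducibility: no finite family of nonzero proper subspaces of ℝ⁴ whose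
    -- union is permuted by all the matrices τ(T_{(θ,η)}), (θ,η) ∈ [0,2π)²
    (¬ ∃ (N : ℕ) (V : Fin (N + 1) → Submodule ℝ (Fin 4 → ℝ)),
        (∀ i, V i ≠ ⊥ ∧ V i ≠ ⊤) ∧
        (∀ θ η : ℝ, θ ∈ Set.Ico 0 (2 * Real.pi) → η ∈ Set.Ico 0 (2 * Real.pi) →
          (tauMap (Tmat t r θ η)).mulVec '' (⋃ i, (V i : Set (Fin 4 → ℝ)))
            = ⋃ i, (V i : Set (Fin 4 → ℝ)))) ∧
    -- in particular: irreducibility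
    (∀ W : Submodule ℝ (Fin 4 → ℝ),
      (∀ θ η : ℝ, θ ∈ Set.Ico 0 (2 * Real.pi) → η ∈ Set.Ico 0 (2 * Real.pi) →
        ∀ x ∈ W, (tauMap (Tmat t r θ η)).mulVec x ∈ W) →
      W = ⊥ ∨ W = ⊤) := by
  constructor
  · rintro ⟨N, V, hV, h⟩
    refine (hV 0).1 (no_invariant t r ht ht1 hr V (fun i => (hV i).2) ?_ 0)
    intro θ hθ η hη i x hx
    have : (tauMap (Tmat t r θ η)).mulVec x ∈ ⋃ i, (V i : Set (Fin 4 → ℝ)) := by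
      rw [← h θ η hθ hη]
      exact ⟨x, Set.mem_iUnion.2 ⟨i, hx⟩, rfl⟩
    exact Set.mem_iUnion.1 this
  · intro W h
    by_cases hW : W = ⊤
    · exact Or.inr hW
    · exact Or.inl (no_invariant t r ht ht1 hr (fun _ : Unit => W) (fun _ => hW)
        (fun θ hθ η hη _ x hx => ⟨(), h θ η hθ hη x hx⟩) ())
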